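/- For every integer T ≥ 1, the gradient of the hard-instance chain function F_T is 152-Lipschitz: ‖∇F_T(x) − ∇F_T(y)‖ ≤ 152·‖x − y‖ for all x, y ∈ ℝ^T, where ‖·‖ is the Euclidean norm. -/

import Mathlib

open MeasureTheory

/-- The scalar function `Ψ` of the hard-instance construction. -/
noncomputable def Psi (t : ℝ) : ℝ :=
  if t ≤ 1 / 2 then 0 else Real.exp (1 - 1 / (2 * t - 1) ^ 2)

/-- The scalar function `Φ(t) = √e ∫_{−∞}^t e^{−τ²/2} dτ` of the hard-instance
construction. -/
noncomputable def Phi (t : ℝ) : ℝ :=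
  Real.sqrt (Real.exp 1) * ∫ τ in Set.Iic t, Real.exp (-τ ^ 2 / 2)

/-- The hard-instance chain function `F_T` on `ℝ^{T+1}` (so the paper's dimension `T ≥ 1`
is `T + 1` here; the paper's coordinate `xᵢ`, `1 ≤ i ≤ T`, is the zero-based coordinate
`x (i−1)`). -/
noncomputable def chainF (T : ℕ) (x : EuclideanSpace ℝ (Fin (T + 1))) : ℝ :=
  -Psi 1 * Phi (x 0) +
    ∑ i : Fin T,
      (Psi (-(x i.castSucc)) * Phi (-(x i.succ)) - Psi (x i.castSucc) * Phi (x i.succ))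

/-- `prog α x` is the largest one-based index `i ∈ {0, 1, …, n}` such that `|xᵢ| > α`
(with the paper's convention `x₀ ≡ 1`, so the value `0` is allowed and returned when no
coordinate exceeds `α`). -/
noncomputable def prog {n : ℕ} (α : ℝ) (x : EuclideanSpace ℝ (Fin n)) : ℕ :=
  (Finset.univ.filter fun i : Fin n => α < |x i|).sup fun i => (i : ℕ) + 1

/-!
The differential of `F_T` at `x` is a linear form whose coefficients are the partial derivatives of
the links between consecutive coordinates. If the partials of each link satisfy Lipschitz estimates
with constants `A`, `B` (first partial) and `B'`, `C` (second partial) in the two variables, then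
Cauchy-Schwarz on coordinates and on shifted coordinates bounds the Lipschitz constant of the
gradient by `A + B + B' + C`, whatever the length of the chain. Since `Ψ` vanishes on the negative
half-line, the two products in a link never interact, and the four constants are products of
sup norms: `‖Ψ''‖ ‖Φ‖ + 2 ‖Ψ'‖ ‖Φ'‖ + ‖Ψ‖ ‖Φ''‖ ≤ 32.5 √(2πe) + 2 √(54/e) √e + e ≤ 152`.
-/

open Real Topology
open scoped NNReal

section Calculus

lemma hasDerivAt_integral_Iic {E : Type*} [NormedAddCommGroup E] [NormedSpace ℝ E]
    [CompleteSpace E] {f : ℝ → E} {t : ℝ} (hf : Integrable f) (ht : ContinuousAt f t) :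
    HasDerivAt (fun u ↦ ∫ τ in Set.Iic u, f τ) (f t) t := by
  have hsplit (u : ℝ) : ∫ τ in Set.Iic u, f τ = (∫ τ in Set.Iic 0, f τ) + ∫ τ in 0..u, f τ := by
    rw [← intervalIntegral.integral_Iic_sub_Iic hf.integrableOn hf.integrableOn,
      add_sub_cancel]
  rw [funext hsplit]
  exact (intervalIntegral.integral_hasDerivAt_right hf.intervalIntegrable
    hf.aestronglyMeasurable.stronglyMeasurableAtFilter ht).const_add _

lemma deriv_eq_zero_of_eqOn_Iic {F : Type*} [NormedAddCommGroup F] [NormedSpace ℝ F]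
    {f : ℝ → F} {a t : ℝ} (hf : DifferentiableAt ℝ f t) (hzero : ∀ s ≤ a, f s = 0)
    (ht : t ≤ a) : deriv f t = 0 := by
  rw [← hf.derivWithin (uniqueDiffOn_Iic a t ht),
    derivWithin_congr (s := Set.Iic a) hzero (hzero t ht)]
  simp only [derivWithin_fun_const, Pi.zero_apply]

lemma norm_gradient_sub_gradient {𝕜 E : Type*} [RCLike 𝕜] [NormedAddCommGroup E]
    [InnerProductSpace 𝕜 E] [CompleteSpace E] (f : E → 𝕜) (x y : E) :
    ‖gradient f x - gradient f y‖ = ‖fderiv 𝕜 f x - fderiv 𝕜 f y‖ := by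
  rw [gradient, gradient, ← map_sub, LinearIsometryEquiv.norm_map]

lemma dist_le_of_lipschitzWith_partial {α β γ : Type*} [PseudoMetricSpace α]
    [PseudoMetricSpace β] [PseudoMetricSpace γ] {g : α → β → γ} {A B : ℝ≥0}
    (hA : ∀ t, LipschitzWith A fun s ↦ g s t) (hB : ∀ s, LipschitzWith B (g s))
    (s s' : α) (t t' : β) : dist (g s t) (g s' t') ≤ A * dist s s' + B * dist t t' :=
  (dist_triangle _ (g s' t) _).trans <|
    add_le_add ((hA t).dist_le_mul s s') ((hB s').dist_le_mul t t')

lemma hasDerivAt_inv_pow {𝕜 : Type*} [NontriviallyNormedField 𝕜] (n : ℕ) {u : 𝕜} (hu : u ≠ 0) :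
    HasDerivAt (fun u ↦ u⁻¹ ^ n) (-(n * u⁻¹ ^ (n + 1))) u := by
  refine ((hasDerivAt_inv hu).fun_pow n).congr_deriv ?_
  cases n with
  | zero => simp
  | succ n =>
    rw [Nat.add_sub_cancel, ← inv_pow]
    ring

lemma le_mul_exp_div_sub_one {c : ℝ} (hc : 0 < c) (x : ℝ) : x ≤ c * exp (x / c - 1) := by
  rw [← div_le_iff₀' hc]
  linarith [add_one_le_exp (x / c - 1)]

end Calculus

section EuclideanSpace

variable {𝕜 ι κ : Type*} [RCLike 𝕜] [Fintype ι] [Fintype κ]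

lemma sqrt_sum_norm_comp_sq_le_norm (x : EuclideanSpace 𝕜 κ) {f : ι → κ}
    (hf : Function.Injective f) : √(∑ i, ‖x (f i)‖ ^ 2) ≤ ‖x‖ := by
  rw [EuclideanSpace.norm_eq]
  gcongr
  calc ∑ i, ‖x (f i)‖ ^ 2 = ∑ j ∈ Finset.univ.map ⟨f, hf⟩, ‖x j‖ ^ 2 := by simp
    _ ≤ ∑ j, ‖x j‖ ^ 2 := Finset.sum_le_univ_sum_of_nonneg fun _ ↦ by positivity

lemma sum_norm_comp_mul_norm_comp_le (x y : EuclideanSpace 𝕜 κ) {f g : ι → κ}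
    (hf : Function.Injective f) (hg : Function.Injective g) :
    ∑ i, ‖x (f i)‖ * ‖y (g i)‖ ≤ ‖x‖ * ‖y‖ :=
  (sum_mul_le_sqrt_mul_sqrt _ _ _).trans <|
    mul_le_mul (sqrt_sum_norm_comp_sq_le_norm x hf) (sqrt_sum_norm_comp_sq_le_norm y hg)
      (sqrt_nonneg _) (norm_nonneg _)

end EuclideanSpace

section PathSum

/-- A function on `ℝ^{T+1}` whose coordinates interact along a path: a boundary term `h` at the
first coordinate and an interaction `g` between consecutive coordinates. -/
noncomputable def pathSum (h : ℝ → ℝ) (g : ℝ → ℝ → ℝ) {T : ℕ}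
    (x : EuclideanSpace ℝ (Fin (T + 1))) : ℝ :=
  h (x 0) + ∑ i : Fin T, g (x i.castSucc) (x i.succ)

/-- The shape of the differential of a `pathSum`: the weights `p i` and `q i` are the two partial
derivatives of the `i`-th interaction, and `a` is the derivative of the boundary term. -/
noncomputable def pathForm {T : ℕ} (a : ℝ) (p q : Fin T → ℝ) :
    EuclideanSpace ℝ (Fin (T + 1)) →L[ℝ] ℝ :=
  a • EuclideanSpace.proj 0 +
    ∑ i, (p i • EuclideanSpace.proj i.castSucc + q i • EuclideanSpace.proj i.succ)

variable {T : ℕ}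

lemma pathForm_apply (a : ℝ) (p q : Fin T → ℝ) (v : EuclideanSpace ℝ (Fin (T + 1))) :
    pathForm a p q v = a * v 0 + ∑ i, (p i * v i.castSucc + q i * v i.succ) := by
  simp [pathForm]

lemma pathForm_sub (a a' : ℝ) (p p' q q' : Fin T → ℝ) :
    pathForm a p q - pathForm a' p' q' = pathForm (a - a') (p - p') (q - q') := by
  ext v
  simp only [sub_apply, pathForm_apply, Pi.sub_apply, add_sub_add_comm,
    ← Finset.sum_sub_distrib, sub_mul]

lemma abs_pathForm_apply_le (a : ℝ) (p q : Fin T → ℝ) (v : EuclideanSpace ℝ (Fin (T + 1))) :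
    |pathForm a p q v| ≤ |a| * |v 0| + ∑ i, (|p i| * |v i.castSucc| + |q i| * |v i.succ|) := by
  simp only [pathForm_apply, ← abs_mul]
  refine (abs_add_le _ _).trans ?_
  gcongr
  exact (Finset.abs_sum_le_sum_abs _ _).trans (Finset.sum_le_sum fun _ _ ↦ abs_add_le _ _)

lemma norm_pathForm_le {A B B' C : ℝ≥0} {a : ℝ} {p q : Fin T → ℝ}
    (d : EuclideanSpace ℝ (Fin (T + 1))) (ha : |a| ≤ C * |d 0|)
    (hp : ∀ i, |p i| ≤ A * |d i.castSucc| + B * |d i.succ|)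
    (hq : ∀ i, |q i| ≤ B' * |d i.castSucc| + C * |d i.succ|) :
    ‖pathForm a p q‖ ≤ (A + B + B' + C) * ‖d‖ := by
  refine ContinuousLinearMap.opNorm_le_bound _ (by positivity) fun v ↦ ?_
  have hc := Fin.castSucc_injective T
  have hs := Fin.succ_injective T
  have hcc := sum_norm_comp_mul_norm_comp_le d v hc hc
  have hsc := sum_norm_comp_mul_norm_comp_le d v hs hc
  have hcs := sum_norm_comp_mul_norm_comp_le d v hc hs
  have hall := sum_norm_comp_mul_norm_comp_le d v Function.injective_id Function.injective_id
  simp only [id, Fin.sum_univ_succ, norm_eq_abs] at hcc hsc hcs hall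
  calc |pathForm a p q v|
      ≤ |a| * |v 0| + ∑ i, (|p i| * |v i.castSucc| + |q i| * |v i.succ|) :=
        abs_pathForm_apply_le a p q v
    _ ≤ C * |d 0| * |v 0| + ∑ i : Fin T, ((A * |d i.castSucc| + B * |d i.succ|) * |v i.castSucc|
          + (B' * |d i.castSucc| + C * |d i.succ|) * |v i.succ|) := by
        gcongr with i
        · exact hp i
        · exact hq i
    _ = A * ∑ i : Fin T, |d i.castSucc| * |v i.castSucc|
          + B * ∑ i : Fin T, |d i.succ| * |v i.castSucc|
          + B' * ∑ i : Fin T, |d i.castSucc| * |v i.succ|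
          + C * (|d 0| * |v 0| + ∑ i : Fin T, |d i.succ| * |v i.succ|) := by
        simp only [add_mul, Finset.sum_add_distrib, mul_add, Finset.mul_sum, mul_assoc]
        ring
    _ ≤ A * (‖d‖ * ‖v‖) + B * (‖d‖ * ‖v‖) + B' * (‖d‖ * ‖v‖) + C * (‖d‖ * ‖v‖) := by
        gcongr
    _ = (A + B + B' + C) * ‖d‖ * ‖v‖ := by ring

variable {h h' : ℝ → ℝ} {g g₁ g₂ : ℝ → ℝ → ℝ}

lemma hasFDerivAt_pathSum (hh : ∀ t, HasDerivAt h (h' t) t)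
    (hg : ∀ s t, HasFDerivAt (Function.uncurry g)
      (g₁ s t • ContinuousLinearMap.fst ℝ ℝ ℝ + g₂ s t • ContinuousLinearMap.snd ℝ ℝ ℝ) (s, t))
    (x : EuclideanSpace ℝ (Fin (T + 1))) :
    HasFDerivAt (pathSum h g) (pathForm (h' (x 0)) (fun i ↦ g₁ (x i.castSucc) (x i.succ))
      fun i ↦ g₂ (x i.castSucc) (x i.succ)) x := by
  have hproj (j : Fin (T + 1)) : HasFDerivAt (fun y : EuclideanSpace ℝ (Fin (T + 1)) ↦ y j)
      (EuclideanSpace.proj (𝕜 := ℝ) j) x := (EuclideanSpace.proj (𝕜 := ℝ) j).hasFDerivAt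
  refine ((hh (x 0)).comp_hasFDerivAt x (hproj 0)).add (HasFDerivAt.fun_sum fun i _ ↦ ?_)
  exact (hg (x i.castSucc) (x i.succ)).comp x ((hproj i.castSucc).prodMk (hproj i.succ))

lemma lipschitzWith_gradient_pathSum {A B B' C : ℝ≥0} (hh : ∀ t, HasDerivAt h (h' t) t)
    (hg : ∀ s t, HasFDerivAt (Function.uncurry g)
      (g₁ s t • ContinuousLinearMap.fst ℝ ℝ ℝ + g₂ s t • ContinuousLinearMap.snd ℝ ℝ ℝ) (s, t))
    (hh' : LipschitzWith C h')
    (hA : ∀ t, LipschitzWith A fun s ↦ g₁ s t) (hB : ∀ s, LipschitzWith B (g₁ s))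
    (hB' : ∀ t, LipschitzWith B' fun s ↦ g₂ s t) (hC : ∀ s, LipschitzWith C (g₂ s)) :
    LipschitzWith (A + B + B' + C) (gradient (pathSum h g (T := T))) := by
  refine LipschitzWith.of_dist_le_mul fun x y ↦ ?_
  rw [dist_eq_norm, dist_eq_norm, norm_gradient_sub_gradient, (hasFDerivAt_pathSum hh hg x).fderiv,
    (hasFDerivAt_pathSum hh hg y).fderiv, pathForm_sub]
  exact norm_pathForm_le (x - y) (hh'.dist_le_mul _ _)
    (fun _ ↦ dist_le_of_lipschitzWith_partial hA hB _ _ _ _)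
    (fun _ ↦ dist_le_of_lipschitzWith_partial hB' hC _ _ _ _)

end PathSum

section Link

/-- The interaction of consecutive coordinates in the hard-instance chain, for arbitrary factors. -/
def oddLink (f g : ℝ → ℝ) (s t : ℝ) : ℝ := f (-s) * g (-t) - f s * g t

/-- The symmetric counterpart of `oddLink`; up to sign, the partial derivatives of either kind of
link are links of the other kind. -/
def evenLink (f g : ℝ → ℝ) (s t : ℝ) : ℝ := f (-s) * g (-t) + f s * g t

variable {f g : ℝ → ℝ} {A B : ℝ≥0}

lemma hasFDerivAt_oddLink (hf : Differentiable ℝ f) (hg : Differentiable ℝ g) (s t : ℝ) :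
    HasFDerivAt (Function.uncurry (oddLink f g))
      (-evenLink (deriv f) g s t • ContinuousLinearMap.fst ℝ ℝ ℝ +
        -evenLink f (deriv g) s t • ContinuousLinearMap.snd ℝ ℝ ℝ) (s, t) := by
  have hs : HasFDerivAt (Prod.fst : ℝ × ℝ → ℝ) (ContinuousLinearMap.fst ℝ ℝ ℝ) (s, t) :=
    hasFDerivAt_fst
  have ht : HasFDerivAt (Prod.snd : ℝ × ℝ → ℝ) (ContinuousLinearMap.snd ℝ ℝ ℝ) (s, t) :=
    hasFDerivAt_snd
  have hneg := ((hf (-s)).hasDerivAt.comp_hasFDerivAt (s, t) hs.neg).mul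
    ((hg (-t)).hasDerivAt.comp_hasFDerivAt (s, t) ht.neg)
  have hpos := ((hf s).hasDerivAt.comp_hasFDerivAt (s, t) hs).mul
    ((hg t).hasDerivAt.comp_hasFDerivAt (s, t) ht)
  refine (hneg.sub hpos).congr_fderiv ?_
  ext <;> simp [evenLink] <;> ring

lemma hasDerivAt_evenLink_left (hf : Differentiable ℝ f) (s t : ℝ) :
    HasDerivAt (fun s ↦ evenLink f g s t) (-oddLink (deriv f) g s t) s := by
  have hneg := ((hf (-s)).hasDerivAt.scomp s (hasDerivAt_neg s)).mul_const (g (-t))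
  refine (hneg.add ((hf s).hasDerivAt.mul_const (g t))).congr_deriv ?_
  simp only [oddLink, smul_eq_mul]
  ring

lemma hasDerivAt_evenLink_right (hg : Differentiable ℝ g) (s t : ℝ) :
    HasDerivAt (evenLink f g s) (-oddLink f (deriv g) s t) t := by
  simpa only [evenLink, oddLink, mul_comm] using! hasDerivAt_evenLink_left (g := f) hg t s

/-- At most one of the two products in the link is nonzero, so no factor `2` is lost. -/
lemma abs_oddLink_le (hzero : ∀ t ≤ 0, f t = 0) (hA : ∀ t, |f t| ≤ A) (hB : ∀ t, |g t| ≤ B)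
    (s t : ℝ) : |oddLink f g s t| ≤ A * B := by
  have hmul (u v : ℝ) : |f u * g v| ≤ A * B := by
    rw [abs_mul]
    exact mul_le_mul (hA u) (hB v) (abs_nonneg _) A.coe_nonneg
  rcases le_total s 0 with hs | hs
  · simpa [oddLink, hzero s hs] using hmul (-s) (-t)
  · simpa [oddLink, hzero (-s) (by linarith)] using hmul s t

lemma lipschitzWith_evenLink_left (hf : Differentiable ℝ f) (hzero : ∀ t ≤ 0, f t = 0)
    (hA : ∀ t, |deriv f t| ≤ A) (hB : ∀ t, |g t| ≤ B) (t : ℝ) :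
    LipschitzWith (A * B) fun s ↦ evenLink f g s t := by
  have hderiv := fun s ↦ hasDerivAt_evenLink_left (g := g) hf s t
  refine lipschitzWith_of_nnnorm_deriv_le (fun s ↦ (hderiv s).differentiableAt) fun s ↦ ?_
  rw [(hderiv s).deriv, nnnorm_neg]
  exact abs_oddLink_le (fun u ↦ deriv_eq_zero_of_eqOn_Iic (hf u) hzero) hA hB s t

lemma lipschitzWith_evenLink_right (hg : Differentiable ℝ g) (hzero : ∀ t ≤ 0, f t = 0)
    (hA : ∀ t, |f t| ≤ A) (hB : ∀ t, |deriv g t| ≤ B) (s : ℝ) :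
    LipschitzWith (A * B) (evenLink f g s) := by
  have hderiv := hasDerivAt_evenLink_right (f := f) hg s
  refine lipschitzWith_of_nnnorm_deriv_le (fun t ↦ (hderiv t).differentiableAt) fun t ↦ ?_
  rw [(hderiv t).deriv, nnnorm_neg]
  exact abs_oddLink_le hzero hA hB s t

theorem lipschitzWith_gradient_pathSum_oddLink {T : ℕ} {c : ℝ} {A₀ A₁ A₂ B₀ B₁ B₂ : ℝ≥0}
    (hf : Differentiable ℝ f) (hf' : Differentiable ℝ (deriv f)) (hzero : ∀ t ≤ 0, f t = 0)
    (hg : Differentiable ℝ g) (hg' : Differentiable ℝ (deriv g)) (hc : |c| ≤ A₀)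
    (hA₀ : ∀ t, |f t| ≤ A₀) (hA₁ : ∀ t, |deriv f t| ≤ A₁) (hA₂ : ∀ t, |deriv (deriv f) t| ≤ A₂)
    (hB₀ : ∀ t, |g t| ≤ B₀) (hB₁ : ∀ t, |deriv g t| ≤ B₁) (hB₂ : ∀ t, |deriv (deriv g) t| ≤ B₂) :
    LipschitzWith (A₂ * B₀ + A₁ * B₁ + A₁ * B₁ + A₀ * B₂)
      (gradient (pathSum (fun t ↦ c * g t) (oddLink f g) (T := T))) := by
  have hzero' (t : ℝ) : t ≤ 0 → deriv f t = 0 := deriv_eq_zero_of_eqOn_Iic (hf t) hzero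
  refine lipschitzWith_gradient_pathSum (fun t ↦ (hg t).hasDerivAt.const_mul c)
    (hasFDerivAt_oddLink hf hg) ?_
    (fun t ↦ (lipschitzWith_evenLink_left hf' hzero' hA₂ hB₀ t).neg)
    (fun s ↦ (lipschitzWith_evenLink_right hg hzero' hA₁ hB₁ s).neg)
    (fun t ↦ (lipschitzWith_evenLink_left hf hzero hA₁ hB₁ t).neg)
    (fun s ↦ (lipschitzWith_evenLink_right hg' hzero hA₀ hB₂ s).neg)
  refine lipschitzWith_of_nnnorm_deriv_le (hg'.const_mul c) fun t ↦ ?_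
  rw [deriv_const_mul _ (hg' t), nnnorm_mul]
  exact mul_le_mul' hc (hB₂ t)

end Link

section ExpNegInvSqGlue

/-- The function that is `exp (-1 / u ^ 2)` for `u > 0` and `0` for `u ≤ 0`; it is flat at `0`, and
`Psi` is a rescaling of it. -/
noncomputable def expNegInvSqGlue (u : ℝ) : ℝ := if u ≤ 0 then 0 else exp (-u⁻¹ ^ 2)

lemma expNegInvSqGlue_of_nonpos {u : ℝ} (hu : u ≤ 0) : expNegInvSqGlue u = 0 := if_pos hu

lemma expNegInvSqGlue_of_pos {u : ℝ} (hu : 0 < u) : expNegInvSqGlue u = exp (-u⁻¹ ^ 2) :=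
  if_neg hu.not_ge

lemma abs_inv_pow_mul_expNegInvSqGlue_le (n : ℕ) (u : ℝ) :
    |u⁻¹ ^ n * expNegInvSqGlue u| ≤ n.factorial * exp 1 := by
  rcases le_or_gt u 0 with hu | hu
  · rw [expNegInvSqGlue_of_nonpos hu, mul_zero, abs_zero]
    positivity
  rw [expNegInvSqGlue_of_pos hu, abs_of_nonneg (by positivity)]
  have hpow : u⁻¹ ^ n ≤ n.factorial * exp u⁻¹ := by
    rw [← div_le_iff₀' (by positivity)]
    exact pow_div_factorial_le_exp _ (by positivity) n
  calc u⁻¹ ^ n * exp (-u⁻¹ ^ 2) ≤ n.factorial * exp u⁻¹ * exp (-u⁻¹ ^ 2) := by gcongr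
    _ = n.factorial * exp (u⁻¹ - u⁻¹ ^ 2) := by rw [mul_assoc, ← exp_add, sub_eq_add_neg]
    _ ≤ n.factorial * exp 1 := by
        gcongr
        nlinarith [sq_nonneg (u⁻¹ - 1)]

lemma hasDerivAt_inv_pow_mul_expNegInvSqGlue_zero (n : ℕ) :
    HasDerivAt (fun u ↦ u⁻¹ ^ n * expNegInvSqGlue u) 0 0 := by
  have hquad : (fun u ↦ u⁻¹ ^ n * expNegInvSqGlue u) =O[𝓝 0] fun u : ℝ ↦ ‖u - 0‖ ^ 2 := by
    refine .of_bound ((n + 2).factorial * exp 1) (.of_forall fun u ↦ ?_)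
    have hshift : u⁻¹ ^ n * expNegInvSqGlue u = u⁻¹ ^ (n + 2) * expNegInvSqGlue u * u ^ 2 := by
      rcases eq_or_ne u 0 with rfl | hu
      · simp [expNegInvSqGlue_of_nonpos]
      · rw [pow_add]
        field_simp
    rw [hshift, norm_mul, sub_zero, norm_pow, norm_pow, norm_norm]
    gcongr
    exact abs_inv_pow_mul_expNegInvSqGlue_le (n + 2) u
  simpa using hquad.hasFDerivAt (𝕜 := ℝ) one_lt_two |>.hasDerivAt

lemma hasDerivAt_inv_pow_mul_expNegInvSqGlue (n : ℕ) (u : ℝ) :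
    HasDerivAt (fun u ↦ u⁻¹ ^ n * expNegInvSqGlue u)
      ((2 * u⁻¹ ^ (n + 3) - n * u⁻¹ ^ (n + 1)) * expNegInvSqGlue u) u := by
  rcases lt_trichotomy u 0 with hu | rfl | hu
  · rw [expNegInvSqGlue_of_nonpos hu.le, mul_zero]
    refine (hasDerivAt_const u (0 : ℝ)).congr_of_eventuallyEq ?_
    filter_upwards [eventually_lt_nhds hu] with x hx
    rw [expNegInvSqGlue_of_nonpos hx.le, mul_zero]
  · simpa [expNegInvSqGlue_of_nonpos] using hasDerivAt_inv_pow_mul_expNegInvSqGlue_zero n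
  · have hsmooth := (hasDerivAt_inv_pow n hu.ne').mul (hasDerivAt_inv_pow 2 hu.ne').fun_neg.exp
    refine (hsmooth.congr_of_eventuallyEq ?_).congr_deriv ?_
    · filter_upwards [eventually_gt_nhds hu] with x hx
      rw [expNegInvSqGlue_of_pos hx]
      rfl
    · rw [expNegInvSqGlue_of_pos hu]
      push_cast
      ring

end ExpNegInvSqGlue

section Psi

lemma Psi_eq (t : ℝ) : Psi t = exp 1 * expNegInvSqGlue (2 * t - 1) := by
  rcases le_or_gt t (1 / 2) with ht | ht
  · rw [Psi, if_pos ht, expNegInvSqGlue_of_nonpos (by linarith), mul_zero]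
  · rw [Psi, if_neg ht.not_ge, expNegInvSqGlue_of_pos (by linarith), ← exp_add, one_div, inv_pow,
      sub_eq_add_neg]

lemma Psi_eq_zero_of_nonpos {t : ℝ} (ht : t ≤ 0) : Psi t = 0 := if_pos (by linarith)

lemma hasDerivAt_inv_pow_mul_expNegInvSqGlue_comp (n : ℕ) (t : ℝ) :
    HasDerivAt (fun t ↦ (2 * t - 1)⁻¹ ^ n * expNegInvSqGlue (2 * t - 1))
      (2 * ((2 * (2 * t - 1)⁻¹ ^ (n + 3) - n * (2 * t - 1)⁻¹ ^ (n + 1)) *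
        expNegInvSqGlue (2 * t - 1))) t := by
  have haffine : HasDerivAt (fun t : ℝ ↦ 2 * t - 1) 2 t := by
    simpa using ((hasDerivAt_id t).const_mul 2).sub_const 1
  exact (hasDerivAt_inv_pow_mul_expNegInvSqGlue n (2 * t - 1)).scomp t haffine

lemma hasDerivAt_Psi (t : ℝ) :
    HasDerivAt Psi (4 * exp 1 * ((2 * t - 1)⁻¹ ^ 3 * expNegInvSqGlue (2 * t - 1))) t := by
  have hPsi : Psi = fun t ↦ exp 1 * ((2 * t - 1)⁻¹ ^ 0 * expNegInvSqGlue (2 * t - 1)) := by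
    funext t
    rw [Psi_eq, pow_zero, one_mul]
  rw [hPsi]
  refine ((hasDerivAt_inv_pow_mul_expNegInvSqGlue_comp 0 t).const_mul (exp 1)).congr_deriv ?_
  push_cast
  ring

lemma deriv_Psi :
    deriv Psi = fun t ↦ 4 * exp 1 * ((2 * t - 1)⁻¹ ^ 3 * expNegInvSqGlue (2 * t - 1)) :=
  deriv_eq hasDerivAt_Psi

lemma hasDerivAt_deriv_Psi (t : ℝ) :
    HasDerivAt (deriv Psi) (8 * exp 1 * ((2 * (2 * t - 1)⁻¹ ^ 6 - 3 * (2 * t - 1)⁻¹ ^ 4) *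
      expNegInvSqGlue (2 * t - 1))) t := by
  rw [deriv_Psi]
  refine ((hasDerivAt_inv_pow_mul_expNegInvSqGlue_comp 3 t).const_mul (4 * exp 1)).congr_deriv ?_
  push_cast
  ring

lemma abs_Psi_le (t : ℝ) : |Psi t| ≤ exp 1 := by
  unfold Psi
  split_ifs
  · simpa using (exp_pos 1).le
  · rw [abs_exp, exp_le_exp, sub_le_self_iff]
    positivity

lemma abs_deriv_Psi_le (t : ℝ) : |deriv Psi t| ≤ √(54 / exp 1) := by
  simp only [deriv_Psi]
  rcases le_or_gt (2 * t - 1) 0 with ht | ht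
  · rw [expNegInvSqGlue_of_nonpos ht, mul_zero, mul_zero, abs_zero]
    positivity
  rw [expNegInvSqGlue_of_pos ht]
  generalize (2 * t - 1)⁻¹ = v
  refine abs_le_sqrt ?_
  -- The maximum is attained at `v ^ 2 = 3 / 2`, where the tangent bound is sharp.
  have htangent : v ^ 2 ≤ 3 / 2 * exp (v ^ 2 / (3 / 2) - 1) :=
    le_mul_exp_div_sub_one (by norm_num) _
  calc (4 * exp 1 * (v ^ 3 * exp (-v ^ 2))) ^ 2
      = 16 * exp 1 ^ 2 * (v ^ 2) ^ 3 * exp (-v ^ 2) ^ 2 := by ring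
    _ ≤ 16 * exp 1 ^ 2 * (3 / 2 * exp (v ^ 2 / (3 / 2) - 1)) ^ 3 * exp (-v ^ 2) ^ 2 := by gcongr
    _ = 54 * (exp 1 ^ 2 * exp (v ^ 2 / (3 / 2) - 1) ^ 3 * exp (-v ^ 2) ^ 2) := by ring
    _ = 54 / exp 1 := by
        simp only [div_eq_mul_inv (54 : ℝ), ← exp_neg, ← exp_nat_mul, ← exp_add]
        congr 2
        push_cast
        ring

lemma sq_mul_three_sub_two_mul_le_one {s : ℝ} (hs : 0 ≤ s) : s ^ 2 * (3 - 2 * s) ≤ 1 := by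
  rw [← sub_nonneg]
  calc 0 ≤ (s - 1) ^ 2 * (2 * s + 1) := by positivity
    _ = 1 - s ^ 2 * (3 - 2 * s) := by ring

/-- The maximum is at `s = (9 + √33) / 4 ≈ 3.69`. Each factor is bounded by its exponential tangent
near that point; the tangent points `18 / 5` and `9 / 2` are chosen to make the exponents cancel. -/
lemma sq_mul_two_mul_sub_three_mul_exp_le {s : ℝ} (hs : 0 ≤ s) :
    s ^ 2 * (2 * s - 3) * exp (1 - s) ≤ 1458 / 25 * exp (-(8 / 3)) := by
  have hs₁ : s ≤ 18 / 5 * exp (s / (18 / 5) - 1) := le_mul_exp_div_sub_one (by norm_num) s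
  have hs₂ : 2 * s - 3 ≤ 9 / 2 * exp ((2 * s - 3) / (9 / 2) - 1) :=
    le_mul_exp_div_sub_one (by norm_num) _
  calc s ^ 2 * (2 * s - 3) * exp (1 - s)
      ≤ s ^ 2 * (9 / 2 * exp ((2 * s - 3) / (9 / 2) - 1)) * exp (1 - s) := by gcongr
    _ ≤ (18 / 5 * exp (s / (18 / 5) - 1)) ^ 2 * (9 / 2 * exp ((2 * s - 3) / (9 / 2) - 1)) *
          exp (1 - s) := by gcongr
    _ = 1458 / 25 * (exp (s / (18 / 5) - 1) ^ 2 * exp ((2 * s - 3) / (9 / 2) - 1) *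
          exp (1 - s)) := by ring
    _ = 1458 / 25 * exp (-(8 / 3)) := by
        rw [← exp_nat_mul, ← exp_add, ← exp_add]
        congr 2
        push_cast
        ring

lemma exp_neg_eight_thirds_le : exp (-(8 / 3)) ≤ 25 / 359 := by
  have hcube : (359 / 25 : ℝ) ^ 3 ≤ exp (8 / 3) ^ 3 := by
    calc (359 / 25 : ℝ) ^ 3 ≤ 2.718 ^ 8 := by norm_num
      _ ≤ exp 1 ^ 8 := by gcongr; linarith [exp_one_gt_d9]
      _ = exp (8 / 3) ^ 3 := by simp only [← exp_nat_mul]; norm_num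
  rw [exp_neg, inv_le_comm₀ (exp_pos _) (by norm_num), inv_div]
  exact le_of_pow_le_pow_left₀ three_ne_zero (exp_pos _).le hcube

lemma abs_deriv_deriv_Psi_le (t : ℝ) : |deriv (deriv Psi) t| ≤ 65 / 2 := by
  rw [(hasDerivAt_deriv_Psi t).deriv]
  rcases le_or_gt (2 * t - 1) 0 with ht | ht
  · rw [expNegInvSqGlue_of_nonpos ht]
    norm_num
  rw [expNegInvSqGlue_of_pos ht]
  generalize (2 * t - 1)⁻¹ = v
  have hs : 0 ≤ v ^ 2 := sq_nonneg v
  have hsubst : 8 * exp 1 * ((2 * v ^ 6 - 3 * v ^ 4) * exp (-v ^ 2)) =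
      8 * ((v ^ 2) ^ 2 * (2 * v ^ 2 - 3) * exp (1 - v ^ 2)) := by
    rw [sub_eq_add_neg 1, exp_add]
    ring
  rw [hsubst, abs_le]
  generalize v ^ 2 = s at hs
  constructor
  · have hexp : exp (1 - s) ≤ exp 1 := exp_le_exp.2 (by linarith)
    have hlower : s ^ 2 * (3 - 2 * s) * exp (1 - s) ≤ 1 * exp 1 :=
      (mul_le_mul_of_nonneg_right (sq_mul_three_sub_two_mul_le_one hs) (exp_pos _).le).trans
        (mul_le_mul_of_nonneg_left hexp zero_le_one)
    linarith [exp_one_lt_d9]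
  · linarith [sq_mul_two_mul_sub_three_mul_exp_le hs, exp_neg_eight_thirds_le]

end Psi

section Phi

lemma exp_neg_sq_div_two (t : ℝ) : exp (-t ^ 2 / 2) = exp (-(1 / 2) * t ^ 2) := by ring_nf

lemma integrable_exp_neg_sq_div_two : Integrable fun t : ℝ ↦ exp (-t ^ 2 / 2) := by
  simpa only [exp_neg_sq_div_two] using integrable_exp_neg_mul_sq one_half_pos

lemma integral_exp_neg_sq_div_two : ∫ t : ℝ, exp (-t ^ 2 / 2) = √(2 * π) := by
  simp only [exp_neg_sq_div_two, integral_gaussian]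
  ring_nf

lemma hasDerivAt_Phi (t : ℝ) : HasDerivAt Phi (√(exp 1) * exp (-t ^ 2 / 2)) t :=
  (hasDerivAt_integral_Iic integrable_exp_neg_sq_div_two (by fun_prop)).const_mul _

lemma deriv_Phi : deriv Phi = fun t ↦ √(exp 1) * exp (-t ^ 2 / 2) := deriv_eq hasDerivAt_Phi

lemma hasDerivAt_deriv_Phi (t : ℝ) :
    HasDerivAt (deriv Phi) (-(√(exp 1) * (t * exp (-t ^ 2 / 2)))) t := by
  rw [deriv_Phi]
  have hexponent : HasDerivAt (fun t : ℝ ↦ -t ^ 2 / 2) (-t) t :=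
    ((hasDerivAt_pow 2 t).neg.div_const 2).congr_deriv (by push_cast; ring)
  exact (hexponent.exp.const_mul _).congr_deriv (by ring)

lemma abs_Phi_le (t : ℝ) : |Phi t| ≤ √(2 * π * exp 1) := by
  have hnonneg : ∀ τ : ℝ, 0 ≤ exp (-τ ^ 2 / 2) := fun _ ↦ (exp_pos _).le
  have hle : ∫ τ in Set.Iic t, exp (-τ ^ 2 / 2) ≤ √(2 * π) :=
    (setIntegral_le_integral integrable_exp_neg_sq_div_two (.of_forall hnonneg)).trans_eq
      integral_exp_neg_sq_div_two
  rw [Phi, abs_of_nonneg (mul_nonneg (sqrt_nonneg _) (integral_nonneg hnonneg)), mul_comm,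
    sqrt_mul (by positivity)]
  gcongr

lemma abs_deriv_Phi_le (t : ℝ) : |deriv Phi t| ≤ √(exp 1) := by
  rw [deriv_Phi, abs_of_nonneg (by positivity)]
  exact mul_le_of_le_one_right (sqrt_nonneg _) (exp_le_one_iff.2 (by linarith [sq_nonneg t]))

lemma abs_deriv_deriv_Phi_le (t : ℝ) : |deriv (deriv Phi) t| ≤ 1 := by
  rw [(hasDerivAt_deriv_Phi t).deriv, ← sq_le_one_iff_abs_le_one]
  calc (-(√(exp 1) * (t * exp (-t ^ 2 / 2)))) ^ 2
      = exp 1 * (t ^ 2 * exp (-t ^ 2 / 2) ^ 2) := by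
        rw [neg_sq, mul_pow, mul_pow, sq_sqrt (exp_pos 1).le]
    _ = exp 1 * (t ^ 2 * exp (-t ^ 2)) := by
        rw [← exp_nat_mul]
        push_cast
        ring_nf
    _ ≤ exp 1 * exp (-1) := by
        gcongr
        exact mul_exp_neg_le_exp_neg_one _
    _ = 1 := by rw [← exp_add, add_neg_cancel, exp_zero]

end Phi

lemma chainF_eq_pathSum (T : ℕ) :
    chainF T = pathSum (fun t ↦ -Psi 1 * Phi t) (oddLink Psi Phi) := rfl

lemma sqrt_two_pi_mul_exp_one_le : √(2 * π * exp 1) ≤ 4.133 := by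
  refine sqrt_le_iff.2 ⟨by norm_num, ?_⟩
  calc 2 * π * exp 1 ≤ 2 * 3.1416 * 2.71829 := by
        gcongr
        · exact pi_lt_d4.le
        · linarith [exp_one_lt_d9]
    _ ≤ 4.133 ^ 2 := by norm_num

lemma sqrt_div_exp_one_mul_sqrt_exp_one_le : √(54 / exp 1) * √(exp 1) ≤ 7.35 := by
  rw [← sqrt_mul (by positivity), div_mul_cancel₀ _ (exp_pos 1).ne']
  exact sqrt_le_iff.2 (by norm_num)

/-- The gradient of the chain function `F_T` is `152`-Lipschitz
(Euclidean norm; stated for dimension `T + 1`, i.e. for every paper dimension `T ≥ 1`). -/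
theorem chainF_gradient_lipschitz (T : ℕ) :
    ∀ x y : EuclideanSpace ℝ (Fin (T + 1)),
      ‖gradient (chainF T) x - gradient (chainF T) y‖ ≤ 152 * ‖x - y‖ := by
  intro x y
  have hlip := lipschitzWith_gradient_pathSum_oddLink (T := T) (f := Psi) (g := Phi) (c := -Psi 1)
    (A₀ := ⟨exp 1, by positivity⟩) (A₁ := ⟨√(54 / exp 1), by positivity⟩) (A₂ := 65 / 2)
    (B₀ := ⟨√(2 * π * exp 1), by positivity⟩) (B₁ := ⟨√(exp 1), by positivity⟩) (B₂ := 1)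
    (fun t ↦ (hasDerivAt_Psi t).differentiableAt)
    (fun t ↦ (hasDerivAt_deriv_Psi t).differentiableAt)
    (fun _ ↦ Psi_eq_zero_of_nonpos)
    (fun t ↦ (hasDerivAt_Phi t).differentiableAt)
    (fun t ↦ (hasDerivAt_deriv_Phi t).differentiableAt)
    ((abs_neg _).trans_le (abs_Psi_le 1))
    abs_Psi_le abs_deriv_Psi_le abs_deriv_deriv_Psi_le
    abs_Phi_le abs_deriv_Phi_le abs_deriv_deriv_Phi_le
  rw [← chainF_eq_pathSum] at hlip
  rw [← dist_eq_norm, ← dist_eq_norm]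
  refine (hlip.dist_le_mul x y).trans (mul_le_mul_of_nonneg_right ?_ dist_nonneg)
  change 65 / 2 * √(2 * π * exp 1) + √(54 / exp 1) * √(exp 1) + √(54 / exp 1) * √(exp 1) +
    exp 1 * 1 ≤ 152
  linarith [exp_one_lt_d9, sqrt_two_pi_mul_exp_one_le, sqrt_div_exp_one_mul_sqrt_exp_one_le]
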